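/- Let (Ω, P) be a finite probability space, k ≥ 1, Λ a finite nonempty set, and p ∈ [1/2, 1]. Let Y : Ω → {0,1}^k be uniformly distributed, X : Ω → Λ, and Z : Ω → {0,1}^k be random variables such that Y and Z are conditionally independent given X (Markov chain Y → X → Z), and such that P[ Z_i = Y_i ] ≥ p for every i ∈ {1,…,k}. Then k·(1 − H₂(p)) ≤ log₂|Λ|, where H₂(p) = −p·log₂ p − (1−p)·log₂(1−p) is the binary entropy function (with H₂(0) = H₂(1) = 0). -/

import Mathlib

open Classical in
/-- The probability of the event `e` in the finite probability space with weights `P`. -/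
noncomputable def prFin {Ω : Type} [Fintype Ω] (P : Ω → ℝ) (e : Ω → Prop) : ℝ :=
  ∑ ω : Ω, if e ω then P ω else 0

/-- The binary entropy function with logarithm base 2,
`H₂(p) = −p·log₂ p − (1−p)·log₂(1−p)` (with `H₂(0) = H₂(1) = 0`, using the convention
`log 0 = 0`). -/
noncomputable def binEntropy2 (p : ℝ) : ℝ :=
  -(p * Real.logb 2 p) - (1 - p) * Real.logb 2 (1 - p)

/-!
Apply the concavity of the logarithm to a trial channel `W`, the product of the symmetric channels
with the error probabilities `εᵢ = P[Zᵢ ≠ Yᵢ]`. By this choice `E[log W(Y, Z)] = -∑ᵢ H(εᵢ)`, where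
`H` is the `|A|`-ary entropy. Since `Y → X → Z` is a Markov chain, the joint probability of
`y, z, x` is at most `P[Y = y] * P[Z = z | X = x]`; for `Y` uniform on `Aⁿ`, summing over `x` gives
`E[W(Y, Z)] ≤ |Λ| / |A|ⁿ`. Hence `n * log |A| - ∑ᵢ H(εᵢ) ≤ log |Λ|`. In the binary case
`εᵢ ≤ 1 - p ≤ 1 / 2` implies `H(εᵢ) ≤ H(p)`.
-/

section FiniteProbability

variable {Ω : Type} [Fintype Ω] {P : Ω → ℝ}

theorem prFin_eq_sum_filter (P : Ω → ℝ) (e : Ω → Prop) [DecidablePred e] :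
    prFin P e = ∑ ω with e ω, P ω := by
  rw [prFin, Finset.sum_filter]
  congr!

theorem prFin_nonneg (hP0 : ∀ ω, 0 ≤ P ω) (e : Ω → Prop) : 0 ≤ prFin P e := by
  classical
  rw [prFin_eq_sum_filter]
  exact Finset.sum_nonneg fun ω _ => hP0 ω

theorem prFin_mono (hP0 : ∀ ω, 0 ≤ P ω) {e f : Ω → Prop} (hef : ∀ ω, e ω → f ω) :
    prFin P e ≤ prFin P f := by
  classical
  rw [prFin_eq_sum_filter, prFin_eq_sum_filter]
  exact Finset.sum_le_sum_of_subset_of_nonneg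
    (Finset.monotone_filter_right _ fun ω _ => hef ω) fun ω _ _ => hP0 ω

theorem prFin_pos (hP0 : ∀ ω, 0 ≤ P ω) {e : Ω → Prop} {ω : Ω} (hω : P ω ≠ 0) (he : e ω) :
    0 < prFin P e := by
  classical
  rw [prFin_eq_sum_filter]
  exact Finset.sum_pos' (fun ω _ => hP0 ω) ⟨ω, by simpa using he, (hP0 ω).lt_of_ne' hω⟩

theorem prFin_add_prFin_not (P : Ω → ℝ) (e : Ω → Prop) :
    prFin P e + prFin P (fun ω => ¬ e ω) = ∑ ω, P ω := by
  classical
  rw [prFin_eq_sum_filter, prFin_eq_sum_filter, Finset.sum_filter_add_sum_filter_not]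

theorem sum_mul_ite_eq_prFin (P : Ω → ℝ) (e : Ω → Prop) [DecidablePred e] (a b : ℝ) :
    ∑ ω, P ω * (if e ω then a else b) = prFin P e * a + prFin P (fun ω => ¬ e ω) * b := by
  simp only [mul_ite, Finset.sum_ite, prFin_eq_sum_filter, Finset.sum_mul]

theorem sum_prFin_eq_and {β : Type*} [Fintype β] (P : Ω → ℝ) (Z : Ω → β) (e : Ω → Prop) :
    ∑ z, prFin P (fun ω => Z ω = z ∧ e ω) = prFin P e := by
  classical
  simp only [prFin_eq_sum_filter, and_comm (b := e _), ← Finset.filter_filter]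
  exact Finset.sum_fiberwise _ Z P

theorem sum_mul_comp_eq_sum_prFin_mul {τ : Type*} [Fintype τ] (P : Ω → ℝ) (T : Ω → τ)
    (g : τ → ℝ) : ∑ ω, P ω * g (T ω) = ∑ t, prFin P (fun ω => T ω = t) * g t := by
  classical
  rw [← Finset.sum_fiberwise Finset.univ T fun ω => P ω * g (T ω)]
  refine Finset.sum_congr rfl fun t _ => ?_
  rw [prFin_eq_sum_filter, Finset.sum_mul]
  refine Finset.sum_congr rfl fun ω hω => ?_
  rw [(Finset.mem_filter.1 hω).2]

theorem sum_mul_log_le_log (hP0 : ∀ ω, 0 ≤ P ω) (hP1 : ∑ ω, P ω = 1) {f : Ω → ℝ} {C : ℝ}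
    (hC : 0 < C) (hf : ∀ ω, P ω ≠ 0 → 0 < f ω) (hfC : ∑ ω, P ω * f ω ≤ C) :
    ∑ ω, P ω * Real.log (f ω) ≤ Real.log C := by
  have tangent (ω : Ω) : P ω * Real.log (f ω) ≤ P ω * (Real.log C - 1) + P ω * f ω / C := by
    rcases eq_or_ne (P ω) 0 with hω | hω
    · simp [hω]
    · have hlog := Real.log_le_sub_one_of_pos (div_pos (hf ω hω) hC)
      rw [Real.log_div (hf ω hω).ne' hC.ne'] at hlog
      calc P ω * Real.log (f ω) ≤ P ω * (Real.log C - 1 + f ω / C) :=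
            mul_le_mul_of_nonneg_left (by linarith) (hP0 ω)
        _ = P ω * (Real.log C - 1) + P ω * f ω / C := by ring
  calc ∑ ω, P ω * Real.log (f ω)
      ≤ ∑ ω, (P ω * (Real.log C - 1) + P ω * f ω / C) := Finset.sum_le_sum fun ω _ => tangent ω
    _ = Real.log C - 1 + (∑ ω, P ω * f ω) / C := by
        rw [Finset.sum_add_distrib, ← Finset.sum_mul, hP1, one_mul, Finset.sum_div]
    _ ≤ Real.log C := by linarith [(div_le_one hC).2 hfC]

end FiniteProbability

section MarkovChain

variable {Ω : Type} [Fintype Ω] {P : Ω → ℝ} {α β Λ : Type*} {Y : Ω → α} {X : Ω → Λ} {Z : Ω → β}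

/-- The random variables `Y → X → Z` form a Markov chain: `Y` and `Z` are conditionally independent
given each value that `X` takes with positive probability. -/
def IsMarkovChain (P : Ω → ℝ) (Y : Ω → α) (X : Ω → Λ) (Z : Ω → β) : Prop :=
  ∀ (y : α) (z : β) (x : Λ), 0 < prFin P (fun ω => X ω = x) →
    prFin P (fun ω => Y ω = y ∧ Z ω = z ∧ X ω = x) / prFin P (fun ω => X ω = x) =
      (prFin P (fun ω => Y ω = y ∧ X ω = x) / prFin P (fun ω => X ω = x)) *
        (prFin P (fun ω => Z ω = z ∧ X ω = x) / prFin P (fun ω => X ω = x))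

theorem IsMarkovChain.prFin_joint_le (hYXZ : IsMarkovChain P Y X Z) (hP0 : ∀ ω, 0 ≤ P ω)
    (y : α) (z : β) (x : Λ) :
    prFin P (fun ω => Y ω = y ∧ Z ω = z ∧ X ω = x) ≤
      prFin P (fun ω => Y ω = y) *
        (prFin P (fun ω => Z ω = z ∧ X ω = x) / prFin P (fun ω => X ω = x)) := by
  rcases (prFin_nonneg hP0 fun ω => X ω = x).eq_or_lt with hx | hx
  · rw [← hx, div_zero, mul_zero, hx]
    exact prFin_mono hP0 fun ω h => h.2.2
  · have joint_eq := hYXZ y z x hx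
    rw [div_mul_eq_mul_div, div_left_inj' hx.ne'] at joint_eq
    rw [joint_eq]
    exact mul_le_mul_of_nonneg_right (prFin_mono hP0 fun ω h => h.1)
      (div_nonneg (prFin_nonneg hP0 _) hx.le)

theorem IsMarkovChain.sum_mul_le_card_mul [Fintype α] [Finite β] [Fintype Λ]
    (hYXZ : IsMarkovChain P Y X Z) (hP0 : ∀ ω, 0 ≤ P ω) {c : ℝ} (hc : 0 ≤ c)
    (hY : ∀ y, prFin P (fun ω => Y ω = y) ≤ c) {W : α → β → ℝ} (hW0 : ∀ y z, 0 ≤ W y z)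
    (hW1 : ∀ z, ∑ y, W y z ≤ 1) :
    ∑ ω, P ω * W (Y ω) (Z ω) ≤ Fintype.card Λ * c := by
  cases nonempty_fintype β
  let q (x : Λ) (z : β) : ℝ := prFin P (fun ω => Z ω = z ∧ X ω = x) / prFin P (fun ω => X ω = x)
  have q_nonneg (x : Λ) (z : β) : 0 ≤ q x z := div_nonneg (prFin_nonneg hP0 _) (prFin_nonneg hP0 _)
  have sum_q_le_one (x : Λ) : ∑ z, q x z ≤ 1 := by
    rw [← Finset.sum_div, sum_prFin_eq_and]
    exact div_self_le_one _
  calc ∑ ω, P ω * W (Y ω) (Z ω)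
      = ∑ x, ∑ z, ∑ y, prFin P (fun ω => Y ω = y ∧ Z ω = z ∧ X ω = x) * W y z := by
        rw [sum_mul_comp_eq_sum_prFin_mul P (fun ω => (X ω, Z ω, Y ω)) fun t => W t.2.2 t.2.1]
        simp only [Fintype.sum_prod_type, Prod.mk.injEq, and_comm, and_assoc]
    _ ≤ ∑ x, ∑ z, ∑ y, c * q x z * W y z := by
        gcongr with x _ z _ y _
        · exact hW0 y z
        · exact (hYXZ.prFin_joint_le hP0 y z x).trans
            (mul_le_mul_of_nonneg_right (hY y) (q_nonneg x z))
    _ = ∑ x, ∑ z, c * q x z * ∑ y, W y z := by simp only [Finset.mul_sum]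
    _ ≤ ∑ x, ∑ z, c * q x z := by
        refine Finset.sum_le_sum fun x _ => Finset.sum_le_sum fun z _ => ?_
        exact mul_le_of_le_one_right (mul_nonneg hc (q_nonneg x z)) (hW1 z)
    _ = ∑ x, c * ∑ z, q x z := by simp only [Finset.mul_sum]
    _ ≤ ∑ _x : Λ, c := by
        gcongr with x _
        exact mul_le_of_le_one_right hc (sum_q_le_one x)
    _ = Fintype.card Λ * c := by simp

end MarkovChain

section SymmetricChannel

variable {A : Type*} [Fintype A] [DecidableEq A]

/-- The `|A|`-ary symmetric channel: the probability that the letter `a` is received as `b`, when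
an error has probability `ε` and all wrong letters are equally likely. -/
noncomputable def symmetricChannel (ε : ℝ) (a b : A) : ℝ :=
  if b = a then 1 - ε else ε / (Fintype.card A - 1)

theorem symmetricChannel_nonneg [Nonempty A] {ε : ℝ} (hε : ε ∈ Set.Icc 0 1) (a b : A) :
    0 ≤ symmetricChannel ε a b := by
  have hcard : (1 : ℝ) ≤ Fintype.card A := mod_cast Fintype.card_pos
  rw [symmetricChannel]
  split_ifs
  · exact sub_nonneg.2 hε.2
  · exact div_nonneg hε.1 (sub_nonneg.2 hcard)

theorem sum_symmetricChannel [Nontrivial A] (ε : ℝ) (b : A) :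
    ∑ a, symmetricChannel ε a b = 1 := by
  have hcard : (1 : ℝ) < Fintype.card A := mod_cast Fintype.one_lt_card
  calc ∑ a, symmetricChannel ε a b
      = (1 - ε) + ∑ a ∈ Finset.univ.erase b, ε / (Fintype.card A - 1) := by
        rw [← Finset.add_sum_erase _ _ (Finset.mem_univ b), symmetricChannel, if_pos rfl]
        congr 1
        exact Finset.sum_congr rfl fun a ha => if_neg (Finset.ne_of_mem_erase ha).symm
    _ = 1 := by
        rw [Finset.sum_const, Finset.card_erase_of_mem (Finset.mem_univ b), Finset.card_univ,
          nsmul_eq_mul, Nat.cast_pred Fintype.card_pos, mul_div_cancel₀ _ (sub_pos.2 hcard).ne']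
        ring

theorem sum_prod_symmetricChannel [Nontrivial A] {ι : Type*} [Fintype ι] [DecidableEq ι]
    (ε : ι → ℝ) (z : ι → A) : ∑ y : ι → A, ∏ i, symmetricChannel (ε i) (y i) (z i) = 1 := by
  rw [← Fintype.prod_sum fun i a => symmetricChannel (ε i) a (z i)]
  simp only [sum_symmetricChannel, Finset.prod_const_one]

variable [Nontrivial A] {Ω : Type} [Fintype Ω] {P : Ω → ℝ}

theorem symmetricChannel_prFin_ne_pos (hP0 : ∀ ω, 0 ≤ P ω) (hP1 : ∑ ω, P ω = 1) (Y Z : Ω → A)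
    {ω : Ω} (hω : P ω ≠ 0) :
    0 < symmetricChannel (prFin P fun ω => Z ω ≠ Y ω) (Y ω) (Z ω) := by
  have hcard : (1 : ℝ) < Fintype.card A := mod_cast Fintype.one_lt_card
  have htotal := (prFin_add_prFin_not P fun ω => Z ω = Y ω).trans hP1
  rw [symmetricChannel]
  split_ifs with h
  · rw [← eq_sub_of_add_eq htotal]
    exact prFin_pos hP0 hω h
  · exact div_pos (prFin_pos hP0 hω h) (sub_pos.2 hcard)

theorem sum_mul_log_symmetricChannel (hP1 : ∑ ω, P ω = 1) (Y Z : Ω → A) :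
    ∑ ω, P ω * Real.log (symmetricChannel (prFin P fun ω => Z ω ≠ Y ω) (Y ω) (Z ω)) =
      -Real.qaryEntropy (Fintype.card A) (prFin P fun ω => Z ω ≠ Y ω) := by
  have hcard : (1 : ℝ) < Fintype.card A := mod_cast Fintype.one_lt_card
  have htotal := (prFin_add_prFin_not P fun ω => Z ω = Y ω).trans hP1
  simp only [symmetricChannel, apply_ite Real.log]
  rw [sum_mul_ite_eq_prFin, eq_sub_of_add_eq htotal]
  set ε := prFin P fun ω => Z ω ≠ Y ω
  have hlog : ε * Real.log (ε / (Fintype.card A - 1)) =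
      ε * Real.log ε - ε * Real.log (Fintype.card A - 1) := by
    rcases eq_or_ne ε 0 with hε | hε
    · simp [hε]
    · rw [Real.log_div hε (sub_pos.2 hcard).ne', mul_sub]
  rw [hlog, Real.qaryEntropy, Real.binEntropy, Real.log_inv, Real.log_inv]
  push_cast
  ring

theorem sum_mul_log_prod_symmetricChannel {ι : Type*} [Fintype ι] (hP0 : ∀ ω, 0 ≤ P ω)
    (hP1 : ∑ ω, P ω = 1) (Y Z : Ω → ι → A) :
    ∑ ω, P ω *
        Real.log (∏ i, symmetricChannel (prFin P fun ω => Z ω i ≠ Y ω i) (Y ω i) (Z ω i)) =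
      -∑ i, Real.qaryEntropy (Fintype.card A) (prFin P fun ω => Z ω i ≠ Y ω i) := by
  rw [← Finset.sum_neg_distrib]
  simp only [← sum_mul_log_symmetricChannel hP1]
  rw [Finset.sum_comm]
  refine Finset.sum_congr rfl fun ω _ => ?_
  rcases eq_or_ne (P ω) 0 with hω | hω
  · simp [hω]
  · rw [← Finset.mul_sum, Real.log_prod fun i _ =>
      (symmetricChannel_prFin_ne_pos hP0 hP1 (fun ω => Y ω i) (fun ω => Z ω i) hω).ne']

end SymmetricChannel

theorem binEntropy2_eq_binEntropy_div_log_two (p : ℝ) :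
    binEntropy2 p = Real.binEntropy p / Real.log 2 := by
  rw [binEntropy2, Real.binEntropy, Real.log_inv, Real.log_inv, Real.logb, Real.logb]
  ring

theorem one_sub_binEntropy2_le {p ε : ℝ} (hp : 1 / 2 ≤ p) (hε : 0 ≤ ε) (hpε : ε ≤ 1 - p) :
    1 - binEntropy2 p ≤ (Real.log 2 - Real.qaryEntropy 2 ε) / Real.log 2 := by
  have hlog : 0 < Real.log 2 := Real.log_pos one_lt_two
  have entropy_le : Real.binEntropy ε ≤ Real.binEntropy p := by
    rw [← Real.binEntropy_one_sub p]
    exact Real.binEntropy_strictMonoOn.monotoneOn ⟨hε, by linarith⟩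
      ⟨hε.trans hpε, by linarith⟩ hpε
  rw [binEntropy2_eq_binEntropy_div_log_two, Real.qaryEntropy_two, sub_div, div_self hlog.ne']
  gcongr

theorem random_access_code_markov_general {Ω : Type} [Fintype Ω] {P : Ω → ℝ}
    (hP0 : ∀ ω, 0 ≤ P ω) (hP1 : ∑ ω, P ω = 1) {ι A Λ : Type*} [Fintype ι] [Fintype A]
    [Nontrivial A] [Fintype Λ] [Nonempty Λ] {Y : Ω → ι → A} {X : Ω → Λ} {Z : Ω → ι → A}
    (hunif : ∀ y, prFin P (fun ω => Y ω = y) = (1 / Fintype.card A : ℝ) ^ Fintype.card ι)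
    (hYXZ : IsMarkovChain P Y X Z) :
    ∑ i, (Real.log (Fintype.card A) -
        Real.qaryEntropy (Fintype.card A) (prFin P fun ω => Z ω i ≠ Y ω i)) ≤
      Real.log (Fintype.card Λ) := by
  classical
  let ε (i : ι) : ℝ := prFin P fun ω => Z ω i ≠ Y ω i
  let W (y z : ι → A) : ℝ := ∏ i, symmetricChannel (ε i) (y i) (z i)
  let c : ℝ := (1 / Fintype.card A) ^ Fintype.card ι
  have hA : (0 : ℝ) < Fintype.card A := mod_cast Fintype.card_pos
  have hΛ : (0 : ℝ) < Fintype.card Λ := mod_cast Fintype.card_pos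
  have hc : 0 < c := pow_pos (one_div_pos.2 hA) _
  have hε (i : ι) : ε i ∈ Set.Icc 0 1 :=
    ⟨prFin_nonneg hP0 _, by
      linarith [prFin_add_prFin_not P fun ω => Z ω i = Y ω i,
        prFin_nonneg hP0 fun ω => Z ω i = Y ω i]⟩
  have mean_W_le : ∑ ω, P ω * W (Y ω) (Z ω) ≤ Fintype.card Λ * c :=
    hYXZ.sum_mul_le_card_mul hP0 hc.le (fun y => (hunif y).le)
      (fun y z => Finset.prod_nonneg fun i _ => symmetricChannel_nonneg (hε i) (y i) (z i))
      fun z => (sum_prod_symmetricChannel ε z).le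
  have gibbs : ∑ ω, P ω * Real.log (W (Y ω) (Z ω)) ≤ Real.log (Fintype.card Λ * c) :=
    sum_mul_log_le_log hP0 hP1 (mul_pos hΛ hc)
      (fun ω hω => Finset.prod_pos fun i _ =>
        symmetricChannel_prFin_ne_pos hP0 hP1 (fun ω => Y ω i) (fun ω => Z ω i) hω) mean_W_le
  rw [sum_mul_log_prod_symmetricChannel hP0 hP1, Real.log_mul hΛ.ne' hc.ne', Real.log_pow,
    one_div, Real.log_inv] at gibbs
  rw [Finset.sum_sub_distrib, Finset.sum_const, Finset.card_univ, nsmul_eq_mul]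
  linarith

/-- **Probabilistic core of the random access code theorem.**  Let `(Ω, P)` be a finite
probability space, `Y : Ω → {0,1}^k` uniformly distributed, `X : Ω → Λ` with `Λ` finite
and nonempty, and `Z : Ω → {0,1}^k`, such that `Y` and `Z` are conditionally independent
given `X` (Markov chain `Y → X → Z`), and `P[Z_i = Y_i] ≥ p` for each `i`, where
`p ∈ [1/2, 1]`.  Then `k·(1 − H₂(p)) ≤ log₂|Λ|`. -/
theorem random_access_code_markov
    (Ω : Type) [Fintype Ω] (P : Ω → ℝ)
    (hP0 : ∀ ω : Ω, 0 ≤ P ω) (hP1 : ∑ ω : Ω, P ω = 1)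
    (k : ℕ) (hk : 1 ≤ k)
    (Λ : Type) [Fintype Λ] [Nonempty Λ]
    (p : ℝ) (hp : p ∈ Set.Icc (1 / 2 : ℝ) 1)
    (Y : Ω → (Fin k → Bool)) (X : Ω → Λ) (Z : Ω → (Fin k → Bool))
    -- `Y` is uniformly distributed on `{0,1}^k`:
    (hunif : ∀ y : Fin k → Bool, prFin P (fun ω => Y ω = y) = (1 / 2 : ℝ) ^ k)
    -- `Y` and `Z` are conditionally independent given `X` (Markov chain `Y → X → Z`):
    (hmarkov : ∀ (y : Fin k → Bool) (z : Fin k → Bool) (x : Λ),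
      0 < prFin P (fun ω => X ω = x) →
      prFin P (fun ω => Y ω = y ∧ Z ω = z ∧ X ω = x) / prFin P (fun ω => X ω = x) =
        (prFin P (fun ω => Y ω = y ∧ X ω = x) / prFin P (fun ω => X ω = x)) *
          (prFin P (fun ω => Z ω = z ∧ X ω = x) / prFin P (fun ω => X ω = x)))
    -- each bit is recovered with probability at least `p`:
    (hrec : ∀ i : Fin k, p ≤ prFin P (fun ω => Z ω i = Y ω i)) :
    (k : ℝ) * (1 - binEntropy2 p) ≤ Real.logb 2 (Fintype.card Λ) := by
  have bit_le (i : Fin k) : 1 - binEntropy2 p ≤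
      (Real.log 2 - Real.qaryEntropy 2 (prFin P fun ω => Z ω i ≠ Y ω i)) / Real.log 2 :=
    one_sub_binEntropy2_le hp.1 (prFin_nonneg hP0 _) <| by
      linarith [prFin_add_prFin_not P fun ω => Z ω i = Y ω i, hrec i]
  calc (k : ℝ) * (1 - binEntropy2 p)
      = ∑ _i : Fin k, (1 - binEntropy2 p) := by
        rw [Fin.sum_const, nsmul_eq_mul]
    _ ≤ ∑ i, (Real.log 2 - Real.qaryEntropy 2 (prFin P fun ω => Z ω i ≠ Y ω i)) / Real.log 2 :=
        Finset.sum_le_sum fun i _ => bit_le i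
    _ ≤ Real.logb 2 (Fintype.card Λ) := by
        rw [← Finset.sum_div]
        refine div_le_div_of_nonneg_right ?_ (Real.log_nonneg one_le_two)
        simpa using random_access_code_markov_general hP0 hP1 (by simpa using hunif) hmarkov
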